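/- arXiv:1505.01994 — 4 statements merged into one kernel-verified Lean document; each statement's English description precedes it below -/
import Mathlib

section
/- Let ϑ₁, ϑ₂, ϑ₃ ∈ (0,1). There exists a nondegenerate spherical triangle, i.e. linearly independent unit vectors x₁, x₂, x₃ in ℝ³, whose angle at the vertex xᵢ equals π·ϑᵢ for i = 1,2,3, if and only if both of the following hold: (i) the numbers 1−ϑ₁, 1−ϑ₂, 1−ϑ₃ satisfy the strict triangle inequality, i.e. 1−ϑᵢ < (1−ϑⱼ) + (1−ϑₖ) for every permutation {i,j,k} of {1,2,3}; and (ii) ϑ₁ + ϑ₂ + ϑ₃ > 1. -/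
/-!
Write `a, b, c` for the cosines of the prescribed angles `A, B, C ∈ (0, π)` and
`Δ = 1 - a² - b² - c² - 2abc`, the Gram determinant of the polar triangle. Both sides of the
equivalence say that `Δ > 0`.

* By `polarGram_eq_prod`, `Δ` is `-4` times a product of four cosines of half-sums of the angles.
  At most one of the three factors `cos ((±A ± B ± C) / 2)` with a single minus sign can be
  nonpositive, which makes `0 < Δ` equivalent to the stated inequalities (`polarGram_pos_iff`).
* If a triangle exists, the spherical law of cosines expresses `a, b, c` through the inner products
  of the vertices, and `Δ` is the square of their (nonzero) Gram determinant divided by positive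
  factors (`polarGram_pos_of_triangle`).
* If `Δ > 0`, the dual law of cosines prescribes the inner products of the vertices, and a triangle
  with these inner products is written down explicitly in coordinates (`exists_triangle`).
-/

open scoped RealInnerProductSpace

noncomputable section

/-- Euclidean 3-space. -/
abbrev E3 := EuclideanSpace ℝ (Fin 3)

/-- The angle of a spherical triangle at the vertex `p`, towards the vertices `q` and `r`:
the angle between the tangent directions at `p` towards `q` and `r`. -/
def sphericalAngle (p q r : E3) : ℝ :=
  InnerProductGeometry.angle (q - ⟪q, p⟫ • p) (r - ⟪r, p⟫ • p)

/-! ### The sign of the polar Gram determinant -/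

/-- The Gram determinant `Δ` of the polar triangle of a spherical triangle whose angles have
cosines `a`, `b`, `c`: the polar triangle has pairwise inner products `-a`, `-b`, `-c`. -/
def polarGram (a b c : ℝ) : ℝ := 1 - a ^ 2 - b ^ 2 - c ^ 2 - 2 * a * b * c

theorem polarGram_eq_prod (A B C : ℝ) :
    polarGram (Real.cos A) (Real.cos B) (Real.cos C) =
      -4 * (Real.cos ((A + B + C) / 2) * Real.cos ((B + C - A) / 2)) *
        (Real.cos ((A + C - B) / 2) * Real.cos ((A + B - C) / 2)) := by
  have h₁ : 2 * Real.cos ((A + B + C) / 2) * Real.cos ((B + C - A) / 2) =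
      Real.cos A + Real.cos (B + C) := by
    rw [Real.two_mul_cos_mul_cos]; ring_nf
  have h₂ : 2 * Real.cos ((A + C - B) / 2) * Real.cos ((A + B - C) / 2) =
      Real.cos (B - C) + Real.cos A := by
    rw [Real.two_mul_cos_mul_cos, ← Real.cos_neg (B - C)]; ring_nf
  have h : -4 * (Real.cos ((A + B + C) / 2) * Real.cos ((B + C - A) / 2)) *
        (Real.cos ((A + C - B) / 2) * Real.cos ((A + B - C) / 2)) =
      -((Real.cos A + Real.cos (B + C)) * (Real.cos (B - C) + Real.cos A)) := by
    rw [← h₁, ← h₂]; ring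
  rw [h, Real.cos_add, Real.cos_sub, polarGram]
  linear_combination (-Real.sin C ^ 2) * Real.sin_sq_add_cos_sq B +
    (Real.cos B ^ 2 - 1) * Real.sin_sq_add_cos_sq C

theorem polarGram_pos_iff {A B C : ℝ} (hA : A ∈ Set.Ioo 0 Real.pi) (hB : B ∈ Set.Ioo 0 Real.pi)
    (hC : C ∈ Set.Ioo 0 Real.pi) :
    0 < polarGram (Real.cos A) (Real.cos B) (Real.cos C) ↔
      (B + C - A < Real.pi ∧ A + C - B < Real.pi ∧ A + B - C < Real.pi) ∧
        Real.pi < A + B + C := by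
  obtain ⟨hA₀, hA₁⟩ := hA
  obtain ⟨hB₀, hB₁⟩ := hB
  obtain ⟨hC₀, hC₁⟩ := hC
  rw [polarGram_eq_prod]
  -- The three differences lie in `(-π, 2π)`, where being below `π` is detected by the sign of the
  -- cosine of the half.
  have key : ∀ x : ℝ, -Real.pi < x → x < 2 * Real.pi →
      (x < Real.pi ∧ 0 < Real.cos (x / 2)) ∨ (Real.pi ≤ x ∧ Real.cos (x / 2) ≤ 0) := by
    intro x h₁ h₂
    rcases lt_or_ge x Real.pi with h | h
    · exact .inl ⟨h, Real.cos_pos_of_mem_Ioo ⟨by linarith, by linarith⟩⟩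
    · exact .inr ⟨h, Real.cos_nonpos_of_pi_div_two_le_of_le (by linarith) (by linarith)⟩
  have hS : (A + B + C ≤ Real.pi ∧ 0 ≤ Real.cos ((A + B + C) / 2)) ∨
      (Real.pi < A + B + C ∧ Real.cos ((A + B + C) / 2) < 0) := by
    rcases le_or_gt (A + B + C) Real.pi with h | h
    · exact .inl ⟨h, Real.cos_nonneg_of_mem_Icc ⟨by linarith, by linarith⟩⟩
    · exact .inr ⟨h, Real.cos_neg_of_pi_div_two_lt_of_lt (by linarith) (by linarith)⟩
  have hX := key (B + C - A) (by linarith) (by linarith)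
  have hY := key (A + C - B) (by linarith) (by linarith)
  have hZ := key (A + B - C) (by linarith) (by linarith)
  generalize Real.cos ((A + B + C) / 2) = s at *
  generalize Real.cos ((B + C - A) / 2) = x at *
  generalize Real.cos ((A + C - B) / 2) = y at *
  generalize Real.cos ((A + B - C) / 2) = z at *
  have hprod : -4 * (s * x) * (y * z) = 4 * (-s * (x * (y * z))) := by ring
  rw [hprod]
  constructor
  · intro h
    have h : 0 < -s * (x * (y * z)) := by linarith
    -- Two of the inequalities can never fail together, and if exactly one of them fails, then a
    -- single factor of `-s * x * y * z` is nonpositive.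
    rcases hS with ⟨hS, hs⟩ | ⟨hS, hs⟩ <;> rcases hX with ⟨hX, hx⟩ | ⟨hX, hx⟩ <;>
      rcases hY with ⟨hY, hy⟩ | ⟨hY, hy⟩ <;> rcases hZ with ⟨hZ, hz⟩ | ⟨hZ, hz⟩ <;>
      first
      | exact ⟨⟨hX, hY, hZ⟩, hS⟩
      | (exfalso; linarith)
      | (exfalso
         have := mul_nonneg hs (mul_nonneg hx.le (mul_nonneg hy.le hz.le))
         linarith)
      | (exfalso
         have := mul_nonneg (neg_nonneg.2 hs.le)
           (mul_nonneg (neg_nonneg.2 hx) (mul_nonneg hy.le hz.le))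
         linarith)
      | (exfalso
         have := mul_nonneg (neg_nonneg.2 hs.le)
           (mul_nonneg hx.le (mul_nonneg (neg_nonneg.2 hy) hz.le))
         linarith)
      | (exfalso
         have := mul_nonneg (neg_nonneg.2 hs.le)
           (mul_nonneg hx.le (mul_nonneg hy.le (neg_nonneg.2 hz)))
         linarith)
  · rintro ⟨⟨h₁, h₂, h₃⟩, h₄⟩
    have hx : 0 < x := by rcases hX with h | h <;> [exact h.2; linarith [h.1]]
    have hy : 0 < y := by rcases hY with h | h <;> [exact h.2; linarith [h.1]]
    have hz : 0 < z := by rcases hZ with h | h <;> [exact h.2; linarith [h.1]]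
    have hs : 0 < -s := by rcases hS with h | h <;> [linarith [h.1]; linarith [h.2]]
    positivity

/-! ### The law of cosines and necessity -/

theorem norm_tangent {p q : E3} (hp : ‖p‖ = 1) (hq : ‖q‖ = 1) :
    ‖q - ⟪q, p⟫ • p‖ = √(1 - ⟪q, p⟫ ^ 2) := by
  have h : ‖q - ⟪q, p⟫ • p‖ ^ 2 = 1 - ⟪q, p⟫ ^ 2 := by
    rw [norm_sub_sq_real, norm_smul, hp, hq, real_inner_smul_right, Real.norm_eq_abs, mul_one,
      sq_abs]
    ring
  rw [← h, Real.sqrt_sq (norm_nonneg _)]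

/-- The spherical law of cosines. -/
theorem cos_sphericalAngle_mul {p q r : E3} (hp : ‖p‖ = 1) (hq : ‖q‖ = 1) (hr : ‖r‖ = 1) :
    Real.cos (sphericalAngle p q r) * (√(1 - ⟪q, p⟫ ^ 2) * √(1 - ⟪r, p⟫ ^ 2)) =
      ⟪q, r⟫ - ⟪q, p⟫ * ⟪r, p⟫ := by
  rw [← norm_tangent hp hq, ← norm_tangent hp hr, sphericalAngle,
    InnerProductGeometry.cos_angle_mul_norm_mul_norm, inner_sub_left, inner_sub_right,
    inner_sub_right, real_inner_smul_left, real_inner_smul_left, real_inner_smul_right,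
    real_inner_smul_right, real_inner_self_eq_norm_sq, hp, real_inner_comm r p]
  ring

theorem gram_pos {x : Fin 3 → E3} (hx : LinearIndependent ℝ x) (hn : ∀ i, ‖x i‖ = 1) :
    0 < 1 - ⟪x 0, x 1⟫ ^ 2 - ⟪x 0, x 2⟫ ^ 2 - ⟪x 1, x 2⟫ ^ 2
      + 2 * ⟪x 0, x 1⟫ * ⟪x 0, x 2⟫ * ⟪x 1, x 2⟫ := by
  have h := (Matrix.posDef_gram_of_linearIndependent (𝕜 := ℝ) hx).det_pos
  rw [Matrix.det_fin_three] at h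
  simp only [Matrix.gram_apply, real_inner_self_eq_norm_sq, hn, real_inner_comm (x 0) (x 1),
    real_inner_comm (x 0) (x 2), real_inner_comm (x 1) (x 2)] at h
  nlinarith [h, real_inner_comm (x 0) (x 1), real_inner_comm (x 0) (x 2),
    real_inner_comm (x 1) (x 2)]

theorem polarGram_pos_of_triangle {x : Fin 3 → E3} (hx : LinearIndependent ℝ x)
    (hn : ∀ i, ‖x i‖ = 1) :
    0 < polarGram (Real.cos (sphericalAngle (x 0) (x 1) (x 2)))
      (Real.cos (sphericalAngle (x 1) (x 2) (x 0)))
      (Real.cos (sphericalAngle (x 2) (x 0) (x 1))) := by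
  have hD := gram_pos hx hn
  have hα := cos_sphericalAngle_mul (hn 0) (hn 1) (hn 2)
  have hβ := cos_sphericalAngle_mul (hn 1) (hn 2) (hn 0)
  have hγ := cos_sphericalAngle_mul (hn 2) (hn 0) (hn 1)
  rw [real_inner_comm (x 0) (x 1), real_inner_comm (x 0) (x 2)] at hα
  rw [real_inner_comm (x 1) (x 2), real_inner_comm (x 0) (x 2)] at hβ
  generalize Real.cos (sphericalAngle (x 0) (x 1) (x 2)) = a at *
  generalize Real.cos (sphericalAngle (x 1) (x 2) (x 0)) = b at *
  generalize Real.cos (sphericalAngle (x 2) (x 0) (x 1)) = c at *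
  have hle : ∀ i j, ⟪x i, x j⟫ ^ 2 ≤ 1 := fun i j ↦ by
    rw [sq_le_one_iff_abs_le_one]
    simpa [hn] using abs_real_inner_le_norm (x i) (x j)
  have hu := hle 0 1
  have hv := hle 0 2
  have hw := hle 1 2
  generalize ⟪x 0, x 1⟫ = u at *
  generalize ⟪x 0, x 2⟫ = v at *
  generalize ⟪x 1, x 2⟫ = w at *
  -- The Gram determinant is nonpositive as soon as one of the inner products is `±1`.
  have hU : 0 < 1 - u ^ 2 := by
    refine lt_of_le_of_ne (by linarith) fun h ↦ ?_
    nlinarith [sq_nonneg (w - u * v)]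
  have hV : 0 < 1 - v ^ 2 := by
    refine lt_of_le_of_ne (by linarith) fun h ↦ ?_
    nlinarith [sq_nonneg (w - u * v)]
  have hW : 0 < 1 - w ^ 2 := by
    refine lt_of_le_of_ne (by linarith) fun h ↦ ?_
    nlinarith [sq_nonneg (u - v * w)]
  have hU' := Real.sq_sqrt hU.le
  have hV' := Real.sq_sqrt hV.le
  have hW' := Real.sq_sqrt hW.le
  have hU₀ := Real.sqrt_pos.2 hU
  have hV₀ := Real.sqrt_pos.2 hV
  have hW₀ := Real.sqrt_pos.2 hW
  generalize √(1 - u ^ 2) = l at *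
  generalize √(1 - v ^ 2) = m at *
  generalize √(1 - w ^ 2) = n at *
  have key : polarGram a b c * (l ^ 2 * m ^ 2 * n ^ 2) =
      (1 - u ^ 2 - v ^ 2 - w ^ 2 + 2 * u * v * w) ^ 2 := by
    have : polarGram a b c * (l ^ 2 * m ^ 2 * n ^ 2) =
        l ^ 2 * m ^ 2 * n ^ 2 - (a * (l * m)) ^ 2 * n ^ 2 - (b * (n * l)) ^ 2 * m ^ 2
          - (c * (m * n)) ^ 2 * l ^ 2 - 2 * (a * (l * m)) * (b * (n * l)) * (c * (m * n)) := by
      rw [polarGram]; ring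
    rw [this, hα, hβ, hγ, hU', hV', hW']
    ring
  have hpos : 0 < l ^ 2 * m ^ 2 * n ^ 2 := by positivity
  exact pos_of_mul_pos_left (key ▸ pow_pos hD 2) hpos.le

/-! ### Construction of a triangle with prescribed angles -/

/-- A converse use of the law of cosines: if the three inner products satisfy it for some
`A ∈ (0, π)`, with `l` and `m` the sines of the sides at `p`, then the angle at `p` is `A`. -/
theorem sphericalAngle_eq {p q r : E3} (hp : ‖p‖ = 1) (hq : ‖q‖ = 1) (hr : ‖r‖ = 1) {A l m : ℝ}
    (hA : A ∈ Set.Ioo 0 Real.pi) (hl : 0 < l) (hm : 0 < m) (hl' : 1 - ⟪q, p⟫ ^ 2 = l ^ 2)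
    (hm' : 1 - ⟪r, p⟫ ^ 2 = m ^ 2) (h : ⟪q, r⟫ - ⟪q, p⟫ * ⟪r, p⟫ = Real.cos A * (l * m)) :
    sphericalAngle p q r = A := by
  have := cos_sphericalAngle_mul hp hq hr
  rw [hl', hm', Real.sqrt_sq hl.le, Real.sqrt_sq hm.le, h] at this
  exact Real.injOn_cos
    ⟨InnerProductGeometry.angle_nonneg _ _, InnerProductGeometry.angle_le_pi _ _⟩
    ⟨hA.1.le, hA.2.le⟩ (mul_right_cancel₀ (mul_pos hl hm).ne' this)

theorem exists_triangle {A B C : ℝ} (hA : A ∈ Set.Ioo 0 Real.pi) (hB : B ∈ Set.Ioo 0 Real.pi)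
    (hC : C ∈ Set.Ioo 0 Real.pi)
    (hΔ : 0 < polarGram (Real.cos A) (Real.cos B) (Real.cos C)) :
    ∃ x : Fin 3 → E3, LinearIndependent ℝ x ∧ (∀ i, ‖x i‖ = 1) ∧
      sphericalAngle (x 0) (x 1) (x 2) = A ∧ sphericalAngle (x 1) (x 2) (x 0) = B ∧
      sphericalAngle (x 2) (x 0) (x 1) = C := by
  have hsA := Real.sin_pos_of_mem_Ioo hA
  have hsB := Real.sin_pos_of_mem_Ioo hB
  have hsC := Real.sin_pos_of_mem_Ioo hC
  have eA := Real.sin_sq_add_cos_sq A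
  have eB := Real.sin_sq_add_cos_sq B
  have eC := Real.sin_sq_add_cos_sq C
  obtain ⟨r, hr, hr'⟩ : ∃ r : ℝ, 0 < r ∧
      r ^ 2 = polarGram (Real.cos A) (Real.cos B) (Real.cos C) :=
    ⟨_, Real.sqrt_pos.2 hΔ, Real.sq_sqrt hΔ.le⟩
  have iA := fun p q r h₁ h₂ h₃ l m ↦ sphericalAngle_eq (p := p) (q := q) (r := r) h₁ h₂ h₃
    (l := l) (m := m) hA
  have iB := fun p q r h₁ h₂ h₃ l m ↦ sphericalAngle_eq (p := p) (q := q) (r := r) h₁ h₂ h₃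
    (l := l) (m := m) hB
  have iC := fun p q r h₁ h₂ h₃ l m ↦ sphericalAngle_eq (p := p) (q := q) (r := r) h₁ h₂ h₃
    (l := l) (m := m) hC
  rw [polarGram] at hr'
  generalize Real.cos A = a at *
  generalize Real.cos B = b at *
  generalize Real.cos C = c at *
  generalize Real.sin A = α at *
  generalize Real.sin B = β at *
  generalize Real.sin C = γ at *
  -- The inner products of the vertices, as given by the dual law of cosines, and the sines
  -- `r / (α * β)`, … of the corresponding sides.
  have hu : 1 - ((c + a * b) / (α * β)) ^ 2 = (r / (α * β)) ^ 2 := by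
    field_simp
    rw [hr']
    linear_combination β ^ 2 * eA + (1 - a ^ 2) * eB
  have hv : 1 - ((b + a * c) / (α * γ)) ^ 2 = (r / (α * γ)) ^ 2 := by
    field_simp
    rw [hr']
    linear_combination γ ^ 2 * eA + (1 - a ^ 2) * eC
  have hw : 1 - ((a + b * c) / (β * γ)) ^ 2 = (r / (β * γ)) ^ 2 := by
    field_simp
    rw [hr']
    linear_combination γ ^ 2 * eB + (1 - b ^ 2) * eC
  have ha : (a + b * c) / (β * γ) - (c + a * b) / (α * β) * ((b + a * c) / (α * γ)) =
      a * (r / (α * β) * (r / (α * γ))) := by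
    field_simp
    rw [hr']
    linear_combination (a + b * c) * eA
  have hb : (b + a * c) / (α * γ) - (a + b * c) / (β * γ) * ((c + a * b) / (α * β)) =
      b * (r / (β * γ) * (r / (α * β))) := by
    field_simp
    rw [hr']
    linear_combination (b + a * c) * eB
  have hc : (c + a * b) / (α * β) - (b + a * c) / (α * γ) * ((a + b * c) / (β * γ)) =
      c * (r / (α * γ) * (r / (β * γ))) := by
    field_simp
    rw [hr']
    linear_combination (c + a * b) * eC
  -- The first vertex is the north pole, the second lies on the zero meridian, and the third on the
  -- meridian of longitude `A`.
  set x₀ : E3 := !₂[0, 0, 1] with hx₀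
  set x₁ : E3 := !₂[r / (α * β), 0, (c + a * b) / (α * β)] with hx₁
  set x₂ : E3 := !₂[r / (α * γ) * a, r / γ, (b + a * c) / (α * γ)] with hx₂
  have h₀₁ : ⟪x₀, x₁⟫ = (c + a * b) / (α * β) := by
    simp [hx₀, hx₁, PiLp.inner_apply, Fin.sum_univ_three]
  have h₀₂ : ⟪x₀, x₂⟫ = (b + a * c) / (α * γ) := by
    simp [hx₀, hx₂, PiLp.inner_apply, Fin.sum_univ_three]
  have h₁₂ : ⟪x₁, x₂⟫ = (a + b * c) / (β * γ) := by
    simp only [hx₁, hx₂, PiLp.inner_apply, Fin.sum_univ_three]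
    simp
    linear_combination -ha
  have n₀ : ‖x₀‖ = 1 := by
    simp [hx₀, EuclideanSpace.norm_eq, Fin.sum_univ_three]
  have n₁ : ‖x₁‖ = 1 := by
    rw [EuclideanSpace.norm_eq, Real.sqrt_eq_one, Fin.sum_univ_three]
    simp only [Real.norm_eq_abs, sq_abs]
    simp [hx₁]
    linear_combination -hu
  have n₂ : ‖x₂‖ = 1 := by
    have e : (r / (α * γ)) ^ 2 * a ^ 2 + (r / γ) ^ 2 = (r / (α * γ)) ^ 2 := by
      field_simp
      linear_combination eA
    rw [EuclideanSpace.norm_eq, Real.sqrt_eq_one, Fin.sum_univ_three]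
    simp only [Real.norm_eq_abs, sq_abs]
    simp only [hx₂]
    simp
    linear_combination e - hv
  have h₁₀ := (real_inner_comm x₁ x₀).symm.trans h₀₁
  have h₂₀ := (real_inner_comm x₂ x₀).symm.trans h₀₂
  have h₂₁ := (real_inner_comm x₂ x₁).symm.trans h₁₂
  refine ⟨![x₀, x₁, x₂], ?_, ?_, ?_, ?_, ?_⟩
  · rw [Fintype.linearIndependent_iff]
    intro g hg
    have hg' : ∀ i, (∑ j, g j • (![x₀, x₁, x₂] : Fin 3 → E3) j) i = 0 := fun i ↦ by
      rw [hg]; rfl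
    have e₀ := hg' 0
    have e₁ := hg' 1
    have e₂ := hg' 2
    simp [Fin.sum_univ_three, hx₀, hx₁, hx₂, hr.ne', hsC.ne'] at e₀ e₁ e₂
    simp [e₁, hr.ne', hsA.ne', hsB.ne'] at e₀
    simp [e₀, e₁] at e₂
    intro i
    fin_cases i <;> simp [e₀, e₁, e₂]
  · intro i
    fin_cases i <;> simp [n₀, n₁, n₂]
  · exact iA x₀ x₁ x₂ n₀ n₁ n₂ (r / (α * β)) (r / (α * γ)) (by positivity) (by positivity)
      (by rw [h₁₀, hu]) (by rw [h₂₀, hv]) (by rw [h₁₂, h₁₀, h₂₀, ha])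
  · exact iB x₁ x₂ x₀ n₁ n₂ n₀ (r / (β * γ)) (r / (α * β)) (by positivity) (by positivity)
      (by rw [h₂₁, hw]) (by rw [h₀₁, hu]) (by rw [h₂₀, h₂₁, h₀₁, hb])
  · exact iC x₂ x₀ x₁ n₂ n₀ n₁ (r / (α * γ)) (r / (β * γ)) (by positivity) (by positivity)
      (by rw [h₀₂, hv]) (by rw [h₁₂, hw]) (by rw [h₀₁, h₀₂, h₁₂, hc])

/-! ### The existence criterion -/

/-- **Existence of convex spherical triangles.**
For `ϑ₁, ϑ₂, ϑ₃ ∈ (0,1)`, a nondegenerate spherical triangle with angles `π·ϑᵢ` exists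
iff the numbers `1 - ϑᵢ` satisfy the strict triangle inequality and `ϑ₁ + ϑ₂ + ϑ₃ > 1`. -/
theorem exists_convex_spherical_triangle_iff (ϑ : Fin 3 → ℝ)
    (hϑ : ∀ i, ϑ i ∈ Set.Ioo (0 : ℝ) 1) :
    (∃ x : Fin 3 → E3, LinearIndependent ℝ x ∧ (∀ i, ‖x i‖ = 1) ∧
        ∀ i : Fin 3, sphericalAngle (x i) (x (i + 1)) (x (i + 2)) = Real.pi * ϑ i) ↔
      ((∀ i : Fin 3, 1 - ϑ i < (1 - ϑ (i + 1)) + (1 - ϑ (i + 2))) ∧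
        1 < ϑ 0 + ϑ 1 + ϑ 2) := by
  have hmem : ∀ i, Real.pi * ϑ i ∈ Set.Ioo 0 Real.pi := fun i ↦
    ⟨mul_pos Real.pi_pos (hϑ i).1, mul_lt_of_lt_one_right Real.pi_pos (hϑ i).2⟩
  have hscale : ∀ t : ℝ, Real.pi * t < Real.pi ↔ t < 1 := fun t ↦
    mul_lt_iff_lt_one_right Real.pi_pos
  have hscale' : ∀ t : ℝ, Real.pi < Real.pi * t ↔ 1 < t := fun t ↦
    lt_mul_iff_one_lt_right Real.pi_pos
  have hcond : ((∀ i : Fin 3, 1 - ϑ i < (1 - ϑ (i + 1)) + (1 - ϑ (i + 2))) ∧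
        1 < ϑ 0 + ϑ 1 + ϑ 2) ↔
      0 < polarGram (Real.cos (Real.pi * ϑ 0)) (Real.cos (Real.pi * ϑ 1))
        (Real.cos (Real.pi * ϑ 2)) := by
    rw [polarGram_pos_iff (hmem 0) (hmem 1) (hmem 2)]
    simp only [← mul_add, ← mul_sub, hscale, hscale']
    refine and_congr_left fun _ ↦ ⟨fun h ↦ ?_, fun h i ↦ ?_⟩
    · have h₀ : 1 - ϑ 0 < (1 - ϑ 1) + (1 - ϑ 2) := h 0
      have h₁ : 1 - ϑ 1 < (1 - ϑ 2) + (1 - ϑ 0) := h 1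
      have h₂ : 1 - ϑ 2 < (1 - ϑ 0) + (1 - ϑ 1) := h 2
      refine ⟨?_, ?_, ?_⟩ <;> linarith
    · obtain ⟨h₀, h₁, h₂⟩ := h
      fin_cases i
      · change 1 - ϑ 0 < (1 - ϑ 1) + (1 - ϑ 2); linarith
      · change 1 - ϑ 1 < (1 - ϑ 2) + (1 - ϑ 0); linarith
      · change 1 - ϑ 2 < (1 - ϑ 0) + (1 - ϑ 1); linarith
  rw [hcond]
  constructor
  · rintro ⟨x, hx, hn, h⟩
    have h₀ : sphericalAngle (x 0) (x 1) (x 2) = Real.pi * ϑ 0 := h 0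
    have h₁ : sphericalAngle (x 1) (x 2) (x 0) = Real.pi * ϑ 1 := h 1
    have h₂ : sphericalAngle (x 2) (x 0) (x 1) = Real.pi * ϑ 2 := h 2
    rw [← h₀, ← h₁, ← h₂]
    exact polarGram_pos_of_triangle hx hn
  · intro h
    obtain ⟨x, hx, hn, h₀, h₁, h₂⟩ := exists_triangle (hmem 0) (hmem 1) (hmem 2) h
    refine ⟨x, hx, hn, fun i ↦ ?_⟩
    fin_cases i
    exacts [h₀, h₁, h₂]
end
end

section
/- Let ϑ = (ϑ₁, ϑ₂, ϑ₃) ∈ (0,1)³. Then d₁(ϑ − 𝟙, ℤ³_odd) > 1 holds if and only if both of the following hold: (i) 1−ϑᵢ < (1−ϑⱼ) + (1−ϑₖ) for every permutation {i,j,k} of {1,2,3}; and (ii) ϑ₁ + ϑ₂ + ϑ₃ > 1. Equivalently, inside the open unit cube (0,1)³ these conditions cut out the open tetrahedron with vertices (1,0,0), (0,1,0), (0,0,1), (1,1,1). -/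
/-!
For `t ∈ (0,1)`, the integer nearest to `t - 1` among the even ones is `0`, at distance `1 - t`,
and among the odd ones it is `-1`, at distance `t`. Hence for every `m ∈ ℤ³_odd` the ℓ¹-distance
from `ϑ - 𝟙` to `m` is at least the distance to the vertex of the cube `[-1,0]³` congruent to `m`
modulo `2` (`abs_lower_bound`). That vertex is one of the four odd ones
`(-1,0,0)`, `(0,-1,0)`, `(0,0,-1)`, `(-1,-1,-1)`, so `d₁(ϑ - 𝟙, ℤ³_odd)` is the minimum of the
four corresponding distances. That each of these exceeds `1` is exactly the three triangle
inequalities and `ϑ₁ + ϑ₂ + ϑ₃ > 1`.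
-/

noncomputable section

/-- The ℓ¹-distance from a point `v ∈ ℝ³` to a subset `A ⊆ ℝ³`. -/
def d1 (v : Fin 3 → ℝ) (A : Set (Fin 3 → ℝ)) : ℝ :=
  sInf ((fun a => ∑ i, |v i - a i|) '' A)

/-- The set `ℤ³_odd` of integer vectors in `ℝ³` with odd coordinate sum. -/
def Z3odd : Set (Fin 3 → ℝ) :=
  {a | ∃ m : Fin 3 → ℤ, (∀ i, a i = m i) ∧ Odd (m 0 + m 1 + m 2)}

/-- Among the integers of a given parity, `0` or `-1` is the closest to `t - 1`. -/
lemma abs_lower_bound {t : ℝ} (h0 : 0 < t) (h1 : t < 1) (m : ℤ) :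
    (Even m ∧ 1 - t ≤ |t - 1 - m|) ∨ (Odd m ∧ t ≤ |t - 1 - m|) := by
  rcases Int.even_or_odd m with hm | hm
  · refine Or.inl ⟨hm, ?_⟩
    obtain ⟨k, rfl⟩ := hm
    rw [le_abs]
    push_cast
    rcases le_or_gt 0 k with hk | hk
    · have : (0 : ℝ) ≤ k := by exact_mod_cast hk
      right; linarith
    · have : (k : ℝ) ≤ -1 := by exact_mod_cast Int.le_sub_one_of_lt hk
      left; linarith
  · refine Or.inr ⟨hm, ?_⟩
    obtain ⟨k, rfl⟩ := hm
    rw [le_abs]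
    push_cast
    rcases le_or_gt 0 k with hk | hk
    · have : (0 : ℝ) ≤ k := by exact_mod_cast hk
      right; linarith
    · have : (k : ℝ) ≤ -1 := by exact_mod_cast Int.le_sub_one_of_lt hk
      left; linarith

lemma d1_le_of_odd (v : Fin 3 → ℝ) (m : Fin 3 → ℤ) (hm : Odd (m 0 + m 1 + m 2)) :
    d1 v Z3odd ≤ |v 0 - m 0| + |v 1 - m 1| + |v 2 - m 2| := by
  refine csInf_le ⟨0, ?_⟩ ⟨fun i => m i, ⟨m, fun _ => rfl, hm⟩, by simp [Fin.sum_univ_three]⟩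
  rintro _ ⟨a, -, rfl⟩
  exact Finset.sum_nonneg fun i _ => abs_nonneg _

lemma Z3odd_nonempty : Z3odd.Nonempty :=
  ⟨fun _ => ((1 : ℤ) : ℝ), fun _ => 1, fun _ => rfl, by decide⟩

/-- Inside the open unit cube `(0,1)³`, the strict holonomy constraint
`d₁(ϑ - 𝟙, ℤ³_odd) > 1` holds iff the numbers `1 - ϑᵢ` satisfy the strict triangle
inequality and `ϑ₁ + ϑ₂ + ϑ₃ > 1`, i.e. it cuts out the open tetrahedron with vertices
`(1,0,0)`, `(0,1,0)`, `(0,0,1)`, `(1,1,1)`. -/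
theorem holonomy_iff_triangle_conditions (ϑ : Fin 3 → ℝ)
    (hϑ : ∀ i, ϑ i ∈ Set.Ioo (0 : ℝ) 1) :
    1 < d1 (fun i => ϑ i - 1) Z3odd ↔
      ((∀ i : Fin 3, 1 - ϑ i < (1 - ϑ (i + 1)) + (1 - ϑ (i + 2))) ∧
        1 < ϑ 0 + ϑ 1 + ϑ 2) := by
  obtain ⟨a0, b0⟩ := hϑ 0
  obtain ⟨a1, b1⟩ := hϑ 1
  obtain ⟨a2, b2⟩ := hϑ 2
  constructor
  · intro h
    have near : ∀ t : ℝ, t < 1 → |t - 1| = 1 - t := fun t ht => by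
      rw [abs_of_neg (by linarith)]; ring
    have e0 := d1_le_of_odd (fun i => ϑ i - 1) ![-1, 0, 0] (by decide)
    have e1 := d1_le_of_odd (fun i => ϑ i - 1) ![0, -1, 0] (by decide)
    have e2 := d1_le_of_odd (fun i => ϑ i - 1) ![0, 0, -1] (by decide)
    have e3 := d1_le_of_odd (fun i => ϑ i - 1) ![-1, -1, -1] (by decide)
    simp [near _ b0, near _ b1, near _ b2, abs_of_pos a0, abs_of_pos a1, abs_of_pos a2]
      at e0 e1 e2 e3
    refine ⟨fun i => ?_, by linarith⟩
    fin_cases i <;> simp <;> linarith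
  · rintro ⟨h, h3⟩
    have h0 : 1 - ϑ 0 < (1 - ϑ 1) + (1 - ϑ 2) := h 0
    have h1 : 1 - ϑ 1 < (1 - ϑ 2) + (1 - ϑ 0) := h 1
    have h2 : 1 - ϑ 2 < (1 - ϑ 0) + (1 - ϑ 1) := h 2
    -- A lower bound exceeding `1` uniformly is needed, since the infimum is not known
    -- beforehand to be attained; the minimum over the four odd vertices serves.
    obtain ⟨c, hc, c0, c1, c2, c3⟩ : ∃ c : ℝ, 1 < c ∧
        c ≤ ϑ 0 + (1 - ϑ 1) + (1 - ϑ 2) ∧ c ≤ (1 - ϑ 0) + ϑ 1 + (1 - ϑ 2) ∧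
        c ≤ (1 - ϑ 0) + (1 - ϑ 1) + ϑ 2 ∧ c ≤ ϑ 0 + ϑ 1 + ϑ 2 := by
      refine ⟨min (min (ϑ 0 + (1 - ϑ 1) + (1 - ϑ 2)) ((1 - ϑ 0) + ϑ 1 + (1 - ϑ 2)))
        (min ((1 - ϑ 0) + (1 - ϑ 1) + ϑ 2) (ϑ 0 + ϑ 1 + ϑ 2)), ?_, ?_, ?_, ?_, ?_⟩
      · simp only [lt_min_iff]
        refine ⟨⟨?_, ?_⟩, ?_, ?_⟩ <;> linarith
      all_goals simp
    refine hc.trans_le (le_csInf (Z3odd_nonempty.image _) ?_)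
    rintro _ ⟨a, ⟨m, hm, hodd⟩, rfl⟩
    simp only [Fin.sum_univ_three, hm]
    rcases abs_lower_bound a0 b0 (m 0) with ⟨p0, q0⟩ | ⟨p0, q0⟩ <;>
    rcases abs_lower_bound a1 b1 (m 1) with ⟨p1, q1⟩ | ⟨p1, q1⟩ <;>
    rcases abs_lower_bound a2 b2 (m 2) with ⟨p2, q2⟩ | ⟨p2, q2⟩ <;>
    first
    | linarith
    | (exfalso
       simp only [Int.even_iff, Int.odd_iff] at p0 p1 p2 hodd
       omega)
end
end

section
/- Let ϑ = (ϑ₁, ϑ₂, ϑ₃) with ϑ₁ ∈ (1,2) and ϑ₂, ϑ₃ ∈ (0,1), and suppose ϑ satisfies the strict holonomy constraint d₁(ϑ − 𝟙, ℤ³_odd) > 1. Then the triple ϑ' = (2−ϑ₁, 1−ϑ₃, 1−ϑ₂) lies in (0,1)³ and also satisfies the strict holonomy constraint d₁(ϑ' − 𝟙, ℤ³_odd) > 1. -/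
/-!
The map `R x = (-x₁, -1 - x₃, -1 - x₂)` is an `ℓ¹`-isometry of `ℝ³`. It is an involution that
sends integer vectors with coordinate sum `s` to integer vectors with coordinate sum `-s - 2`,
so it preserves `ℤ³_odd`, and it sends `ϑ - 𝟙` to `ϑ' - 𝟙`. Hence the `ℓ¹`-distances of
`ϑ - 𝟙` and `ϑ' - 𝟙` to `ℤ³_odd` agree; only the inequality `≤` is needed.
-/

noncomputable section

lemma d1_le_of_mem {A : Set (Fin 3 → ℝ)} (v : Fin 3 → ℝ) {a : Fin 3 → ℝ} (ha : a ∈ A) :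
    d1 v A ≤ ∑ i, |v i - a i| := by
  refine csInf_le ⟨0, ?_⟩ ⟨a, ha, rfl⟩
  rintro _ ⟨b, -, rfl⟩
  exact Finset.sum_nonneg fun i _ => abs_nonneg _

lemma reflect_mem_Z3odd {a : Fin 3 → ℝ} (ha : a ∈ Z3odd) :
    ![-a 0, -1 - a 2, -1 - a 1] ∈ Z3odd := by
  obtain ⟨m, hm, k, hk⟩ := ha
  refine ⟨![-m 0, -1 - m 2, -1 - m 1], fun i => ?_, -k - 2, ?_⟩
  · fin_cases i <;> simp [hm]
  · simp only [Matrix.cons_val]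
    omega

/-- If `ϑ₁ ∈ (1,2)`, `ϑ₂, ϑ₃ ∈ (0,1)` and `ϑ` satisfies the strict holonomy constraint,
then `ϑ' = (2 - ϑ₁, 1 - ϑ₃, 1 - ϑ₂)` lies in `(0,1)³` and satisfies the strict holonomy
constraint as well. -/
theorem holonomy_of_reflected_triple (ϑ : Fin 3 → ℝ)
    (h1 : ϑ 0 ∈ Set.Ioo (1 : ℝ) 2) (h2 : ϑ 1 ∈ Set.Ioo (0 : ℝ) 1)
    (h3 : ϑ 2 ∈ Set.Ioo (0 : ℝ) 1)
    (hhol : 1 < d1 (fun i => ϑ i - 1) Z3odd) :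
    (∀ i, ![2 - ϑ 0, 1 - ϑ 2, 1 - ϑ 1] i ∈ Set.Ioo (0 : ℝ) 1) ∧
      1 < d1 (fun i => ![2 - ϑ 0, 1 - ϑ 2, 1 - ϑ 1] i - 1) Z3odd := by
  refine ⟨fun i => ?_, lt_of_lt_of_le hhol ?_⟩
  · obtain ⟨h1l, h1r⟩ := h1
    obtain ⟨h2l, h2r⟩ := h2
    obtain ⟨h3l, h3r⟩ := h3
    fin_cases i <;> simp only [Fin.zero_eta, Fin.mk_one, Fin.reduceFinMk, Matrix.cons_val,
      Set.mem_Ioo] <;> constructor <;> linarith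
  · refine le_csInf (Z3odd_nonempty.image _) ?_
    rintro _ ⟨a, ha, rfl⟩
    refine (d1_le_of_mem _ (reflect_mem_Z3odd ha)).trans_eq ?_
    simp only [Fin.sum_univ_three, Matrix.cons_val]
    -- Each term matches one on the other side up to sign, with the last two interchanged.
    rw [← abs_neg (ϑ 0 - 1 - -a 0), ← abs_neg (ϑ 1 - 1 - (-1 - a 2)),
      ← abs_neg (ϑ 2 - 1 - (-1 - a 1))]
    ring_nf
end
end

section
/- Let ϑ₁, ϑ₂ ∈ (0,1) with ϑ₃ := ϑ₁ + ϑ₂ − 1 > 0. Then for every ε > 0 there exist η ∈ (0, ε) and linearly independent unit vectors x₁, x₂, x₃ in ℝ³ forming a nondegenerate spherical triangle whose angles are π·ϑ₁ at x₁, π·ϑ₂ at x₂, and π(ϑ₃ + η) at x₃, such that the spherical distances satisfy d(x₁, x₃) > π(1−ε) and d(x₂, x₃) > π(1−ε), and moreover every point p of the geodesic side joining x₁ to x₂ (i.e. every unit vector of the form (a₁x₁ + a₂x₂)/‖a₁x₁ + a₂x₂‖ with a₁, a₂ ≥ 0 not both zero) satisfies d(x₃, p) > π(1−ε). -/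
/-!
Write `A = πϑ₁` and `B = πϑ₂`, so that `π < A + B < 2π`. Take a short arc of length `t` from `x₁` to
`x₂` and leave its endpoints at the interior angles `A` and `B`. The two great circles obtained meet
in a pair of antipodal points close to the arc, resp. close to its antipode. Since `A + B > π`, the
rays diverge on the chosen side, so they first meet near the antipode of the arc, and this
intersection is `x₃`. (Equivalently, `-x₃, x₁, x₂` is a small triangle with angles `π - A`, `π - B`
at `x₁`, `x₂`.)

Explicitly, `x₃` is the normalization of
`(cos A cos t sin B + sin A cos B, sin t sin B cos A, sin t sin B sin A)`
when `x₁ = e₁` and `x₂ = (cos t, sin t, 0)`. All angles are read off from the Gram matrix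
(`sphericalAngle_eq`). The third angle `γ` satisfies the dual law of cosines
`cos γ = -cos A cos B + sin A sin B cos t`, so `γ > A + B - π` for `t > 0` and
`γ → A + B - π` as `t → 0`. Likewise the inner products of `x₃` with `x₁`, `x₂` tend to `-1`, and an
upper bound `-c ≤ 0` for these two passes to every point of the side by the triangle inequality.
Hence any sufficiently small `t > 0` works (`exists_small_side`).
-/


open scoped RealInnerProductSpace

noncomputable section

/-- The spherical distance between two unit vectors. -/
def sphericalDist (p q : E3) : ℝ := Real.arccos ⟪p, q⟫

open Real Filter Topology

/-- The spherical law of cosines, solved for the angle: `a` and `b` are the sines of the two sides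
adjacent to the vertex `p`. -/
lemma sphericalAngle_eq_s8 {p q r : E3} (hp : ‖p‖ = 1) (hq : ‖q‖ = 1) (hr : ‖r‖ = 1)
    {a b θ : ℝ} (ha : 0 < a) (hb : 0 < b) (ha2 : a ^ 2 = 1 - ⟪q, p⟫ ^ 2)
    (hb2 : b ^ 2 = 1 - ⟪r, p⟫ ^ 2) (h0 : 0 ≤ θ) (hπ : θ ≤ π)
    (h : ⟪q, r⟫ - ⟪q, p⟫ * ⟪r, p⟫ = a * b * cos θ) :
    sphericalAngle p q r = θ := by
  have key : ∀ u v : E3, ⟪u - ⟪u, p⟫ • p, v - ⟪v, p⟫ • p⟫ = ⟪u, v⟫ - ⟪u, p⟫ * ⟪v, p⟫ := by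
    intro u v
    simp only [inner_sub_left, inner_sub_right, real_inner_smul_left, real_inner_smul_right,
      real_inner_self_eq_norm_sq, hp, real_inner_comm p]
    ring
  have norm_eq : ∀ (u : E3) (c : ℝ), ‖u‖ = 1 → 0 < c → c ^ 2 = 1 - ⟪u, p⟫ ^ 2 →
      ‖u - ⟪u, p⟫ • p‖ = c := by
    intro u c hu hc h2
    rw [← sq_eq_sq₀ (norm_nonneg _) hc.le, ← real_inner_self_eq_norm_sq, key,
      real_inner_self_eq_norm_sq, hu, h2]
    ring
  unfold sphericalAngle InnerProductGeometry.angle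
  rw [key, norm_eq q a hq ha ha2, norm_eq r b hr hb hb2, h,
    mul_div_cancel_left₀ _ (mul_pos ha hb).ne', arccos_cos h0 hπ]

lemma lt_arccos_of_lt_neg_cos {ε δ y : ℝ} (hδ0 : 0 ≤ δ) (hδ1 : δ ≤ 1) (hδε : δ ≤ ε)
    (hy1 : -1 ≤ y) (hy : y < -cos (π * δ)) : π * (1 - ε) < arccos y := by
  have hπ := pi_pos
  have e : arccos (-cos (π * δ)) = π * (1 - δ) := by
    rw [arccos_neg, arccos_cos (by positivity) (by nlinarith)]; ring
  have := arccos_lt_arccos hy1 hy (by linarith [neg_one_le_cos (π * δ)])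
  nlinarith

/-- An upper bound `-c ≤ 0` on the inner products of a unit vector with the two ends of a side
holds on the whole side, because `‖a₁ • u + a₂ • v‖ ≤ a₁ + a₂`. -/
lemma inner_side_lt {u v w : E3} (hu : ‖u‖ = 1) (hv : ‖v‖ = 1) {c : ℝ} (hc : 0 ≤ c)
    (huw : ⟪w, u⟫ < -c) (hvw : ⟪w, v⟫ < -c) {a₁ a₂ : ℝ} (h₁ : 0 ≤ a₁) (h₂ : 0 ≤ a₂)
    (h : ¬(a₁ = 0 ∧ a₂ = 0)) :
    ⟪w, ‖a₁ • u + a₂ • v‖⁻¹ • (a₁ • u + a₂ • v)⟫ < -c := by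
  have hs : 0 < a₁ + a₂ := by
    rcases h₁.lt_or_eq with h' | h'
    · linarith
    · rcases h₂.lt_or_eq with h'' | h''
      · linarith
      · exact absurd ⟨h'.symm, h''.symm⟩ h
  have hle : ‖a₁ • u + a₂ • v‖ ≤ a₁ + a₂ := by
    refine (norm_add_le _ _).trans_eq ?_
    rw [norm_smul, norm_smul, hu, hv, norm_of_nonneg h₁, norm_of_nonneg h₂]; ring
  have hin : ⟪w, a₁ • u + a₂ • v⟫ < -c * (a₁ + a₂) := by
    rw [inner_add_right, real_inner_smul_right, real_inner_smul_right]
    rcases h₁.lt_or_eq with h' | h'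
    · nlinarith
    · subst h'; nlinarith
  have hpos : 0 < ‖a₁ • u + a₂ • v‖ := by
    rw [norm_pos_iff]
    intro h0
    rw [h0, inner_zero_right] at hin
    rw [h0, norm_zero] at hle
    -- the pairing with `w` is negative, so the combination cannot vanish
    nlinarith
  rw [real_inner_smul_right, inv_mul_lt_iff₀ hpos]
  nlinarith

/-- Smallness of the side `t`. Here `p / n` and `q / n` are the inner products of `x₃` with
`x₁` and `x₂`, where `n` is the norm of the unnormalized vector `x₃`; the `arccos` is the angle
at `x₃`. -/
lemma exists_small_side {A B : ℝ} (hs : sin (A + B) < 0) {c γ : ℝ} (hc : c < 1)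
    (hγ : arccos (-cos (A + B)) < γ) :
    ∃ t, 0 < t ∧ t < π ∧
      (cos A * cos t * sin B + sin A * cos B) /
        √((cos A * cos t * sin B + sin A * cos B) ^ 2 + (sin t * sin B) ^ 2) < -c ∧
      (cos A * sin B + sin A * cos B * cos t) /
        √((cos A * cos t * sin B + sin A * cos B) ^ 2 + (sin t * sin B) ^ 2) < -c ∧
      arccos (-cos A * cos B + sin A * sin B * cos t) < γ := by
  have hs' : cos A * sin B + sin A * cos B = sin (A + B) := by rw [sin_add]; ring
  have hn0 : √((cos A * cos 0 * sin B + sin A * cos B) ^ 2 + (sin 0 * sin B) ^ 2)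
      = -sin (A + B) := by
    rw [cos_zero, sin_zero, mul_one, hs', zero_mul, zero_pow two_ne_zero, add_zero, sqrt_sq_eq_abs,
      abs_of_neg hs]
  have hn0' : √((cos A * cos 0 * sin B + sin A * cos B) ^ 2 + (sin 0 * sin B) ^ 2) ≠ 0 := by
    rw [hn0]; exact (neg_pos.2 hs).ne'
  have hr : sin (A + B) / -sin (A + B) = -1 := by
    rw [div_neg, div_self hs.ne]
  have e1 : ∀ᶠ t in 𝓝 (0 : ℝ), (cos A * cos t * sin B + sin A * cos B) /
      √((cos A * cos t * sin B + sin A * cos B) ^ 2 + (sin t * sin B) ^ 2) < -c := by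
    have hcont : ContinuousAt (fun t : ℝ => (cos A * cos t * sin B + sin A * cos B) /
      √((cos A * cos t * sin B + sin A * cos B) ^ 2 + (sin t * sin B) ^ 2)) 0 := by
      refine ContinuousAt.div (by fun_prop) (by fun_prop) hn0'
    refine hcont.eventually_lt continuousAt_const ?_
    simp only [hn0]
    rw [cos_zero, mul_one, hs', hr]
    linarith
  have e2 : ∀ᶠ t in 𝓝 (0 : ℝ), (cos A * sin B + sin A * cos B * cos t) /
      √((cos A * cos t * sin B + sin A * cos B) ^ 2 + (sin t * sin B) ^ 2) < -c := by
    have hcont : ContinuousAt (fun t : ℝ => (cos A * sin B + sin A * cos B * cos t) /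
      √((cos A * cos t * sin B + sin A * cos B) ^ 2 + (sin t * sin B) ^ 2)) 0 := by
      refine ContinuousAt.div (by fun_prop) (by fun_prop) hn0'
    refine hcont.eventually_lt continuousAt_const ?_
    simp only [hn0]
    rw [cos_zero, mul_one, hs', hr]
    linarith
  have e3 : ∀ᶠ t in 𝓝 (0 : ℝ), arccos (-cos A * cos B + sin A * sin B * cos t) < γ := by
    have hcont : Continuous (fun t : ℝ => arccos (-cos A * cos B + sin A * sin B * cos t)) :=
      continuous_arccos.comp (by fun_prop)
    refine hcont.continuousAt.eventually_lt continuousAt_const ?_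
    refine lt_of_eq_of_lt ?_ hγ
    rw [cos_zero, cos_add]
    congr 1; ring
  have e4 : ∀ᶠ t in 𝓝[>] (0 : ℝ), t ∈ Set.Ioo 0 π := Ioo_mem_nhdsGT pi_pos
  obtain ⟨t, ht, h1, h2, h3⟩ := (e4.and ((e1.and (e2.and e3)).filter_mono nhdsWithin_le_nhds)).exists
  exact ⟨t, ht.1, ht.2, h1, h2, h3⟩

/-- The triangle with side `t` between angles `A` and `B`, placed in coordinates: the first vertex
is `e₁` and the second lies in the plane of `e₁` and `e₂`. -/
lemma exists_triangle_s8 {A B t : ℝ} (hA : 0 < sin A) (hB : 0 < sin B) (ht : 0 < sin t) {n : ℝ}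
    (hn : 0 < n)
    (hn2 : n ^ 2 = (cos A * cos t * sin B + sin A * cos B) ^ 2 + (sin t * sin B) ^ 2) :
    ∃ x : Fin 3 → E3, LinearIndependent ℝ x ∧ (∀ i, ‖x i‖ = 1) ∧ ⟪x 0, x 1⟫ = cos t ∧
      ⟪x 0, x 2⟫ = (cos A * cos t * sin B + sin A * cos B) / n ∧
      ⟪x 1, x 2⟫ = (cos A * sin B + sin A * cos B * cos t) / n := by
  have hct := sin_sq_add_cos_sq t
  have hcA := sin_sq_add_cos_sq A
  refine ⟨![!₂[1, 0, 0], !₂[cos t, sin t, 0], !₂[(cos A * cos t * sin B + sin A * cos B) / n,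
    sin t * sin B * cos A / n, sin t * sin B * sin A / n]], ?_, ?_, ?_, ?_, ?_⟩
  · rw [Fintype.linearIndependent_iff]
    intro g hg
    have c0 := congrArg (fun v : E3 => v 0) hg
    have c1 := congrArg (fun v : E3 => v 1) hg
    have c2 := congrArg (fun v : E3 => v 2) hg
    simp [Fin.sum_univ_three] at c0 c1 c2
    have g2 : g 2 = 0 := by
      rcases c2 with h | h
      · exact h
      · exfalso
        revert h
        simp [hA.ne', hB.ne', ht.ne', hn.ne']
    have g1 : g 1 = 0 := by simpa [g2, ht.ne'] using c1
    have g0 : g 0 = 0 := by simpa [g2, g1] using c0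
    intro i
    fin_cases i <;> assumption
  · intro i
    have h1 : ∀ v : E3, v 0 ^ 2 + v 1 ^ 2 + v 2 ^ 2 = 1 → ‖v‖ = 1 := by
      intro v hv
      rw [EuclideanSpace.norm_eq, Fin.sum_univ_three]
      simp [hv]
    apply h1
    fin_cases i
    · simp
    · simp
    · simp
      field_simp
      rw [hn2]
      linear_combination (sin t ^ 2 * sin B ^ 2) * hcA
  · simp [PiLp.inner_apply, Fin.sum_univ_three]
  · simp [PiLp.inner_apply, Fin.sum_univ_three]
  · simp [PiLp.inner_apply, Fin.sum_univ_three]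
    field_simp
    linear_combination (cos A * sin B) * hct

/-- The two expressions for the squared norm of the unnormalized third vertex, seen from either end
of the side `t`. -/
lemma sq_side_identity (A B t : ℝ) :
    (cos A * cos t * sin B + sin A * cos B) ^ 2 + (sin t * sin B) ^ 2 =
      (cos A * sin B + sin A * cos B * cos t) ^ 2 + (sin t * sin A) ^ 2 := by
  simp only [mul_pow, add_sq, sin_sq]
  ring

/-- The dual law of cosines, with denominators cleared. -/
lemma third_angle_identity (A B t : ℝ) :
    cos t * ((cos A * cos t * sin B + sin A * cos B) ^ 2 + (sin t * sin B) ^ 2) -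
        (cos A * cos t * sin B + sin A * cos B) * (cos A * sin B + sin A * cos B * cos t) =
      sin t ^ 2 * sin B * sin A * (-cos A * cos B + sin A * sin B * cos t) := by
  have hA := sin_sq A
  have ht := sin_sq t
  linear_combination (cos t * sin B ^ 2 + sin A * cos A * sin B * cos B -
    sin A ^ 2 * sin B ^ 2 * cos t) * ht - (1 - cos t ^ 2) * sin B ^ 2 * cos t * hA

/-- **Triangles close to an ordinary bigon** (convex case).
If `ϑ₁, ϑ₂ ∈ (0,1)` and `ϑ₃ = ϑ₁ + ϑ₂ - 1 > 0`, then for every `ε > 0` there exist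
`η ∈ (0, ε)` and a nondegenerate spherical triangle with angles
`π·ϑ₁, π·ϑ₂, π(ϑ₃ + η)` which is `π(1-ε)`-wide at the third vertex: the third vertex is
at spherical distance greater than `π(1-ε)` from the opposite side (and from the other
two vertices). -/
theorem triangle_close_to_ordinary_bigon (ϑ₁ ϑ₂ : ℝ)
    (h1 : ϑ₁ ∈ Set.Ioo (0 : ℝ) 1) (h2 : ϑ₂ ∈ Set.Ioo (0 : ℝ) 1)
    (h3 : 0 < ϑ₁ + ϑ₂ - 1) :
    ∀ ε > (0 : ℝ), ∃ η ∈ Set.Ioo (0 : ℝ) ε, ∃ x : Fin 3 → E3,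
      LinearIndependent ℝ x ∧ (∀ i, ‖x i‖ = 1) ∧
      sphericalAngle (x 0) (x 1) (x 2) = Real.pi * ϑ₁ ∧
      sphericalAngle (x 1) (x 2) (x 0) = Real.pi * ϑ₂ ∧
      sphericalAngle (x 2) (x 0) (x 1) = Real.pi * ((ϑ₁ + ϑ₂ - 1) + η) ∧
      sphericalDist (x 0) (x 2) > Real.pi * (1 - ε) ∧
      sphericalDist (x 1) (x 2) > Real.pi * (1 - ε) ∧
      ∀ a₁ a₂ : ℝ, 0 ≤ a₁ → 0 ≤ a₂ → ¬(a₁ = 0 ∧ a₂ = 0) →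
        sphericalDist (x 2) (‖a₁ • x 0 + a₂ • x 1‖⁻¹ • (a₁ • x 0 + a₂ • x 1)) >
          Real.pi * (1 - ε) := by
  intro ε hε
  have hπ := pi_pos
  obtain ⟨h1p, h1l⟩ := h1
  obtain ⟨h2p, h2l⟩ := h2
  obtain ⟨A, hAdef⟩ : ∃ A, A = π * ϑ₁ := ⟨_, rfl⟩
  obtain ⟨B, hBdef⟩ : ∃ B, B = π * ϑ₂ := ⟨_, rfl⟩
  have hA0 : 0 < A := by rw [hAdef]; positivity
  have hB0 : 0 < B := by rw [hBdef]; positivity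
  have hAπ : A < π := by rw [hAdef]; nlinarith
  have hBπ : B < π := by rw [hBdef]; nlinarith
  have hAB : π < A + B := by rw [hAdef, hBdef]; nlinarith
  have hsA := sin_pos_of_pos_of_lt_pi hA0 hAπ
  have hsB := sin_pos_of_pos_of_lt_pi hB0 hBπ
  have hs : sin (A + B) < 0 := by
    have := sin_pos_of_pos_of_lt_pi (x := A + B - π) (by linarith) (by linarith)
    rw [sin_sub_pi] at this
    linarith
  have hlim : arccos (-cos (A + B)) = A + B - π := by
    rw [← cos_sub_pi, arccos_cos (by linarith) (by linarith)]
  -- `δ ≤ 1/3` keeps `c = cos (π δ)` nonnegative, as `inner_side_lt` requires.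
  obtain ⟨δ, hδ0, hδ1, hδε⟩ : ∃ δ : ℝ, 0 < δ ∧ δ ≤ 1 / 3 ∧ δ ≤ ε :=
    ⟨min ε (1 / 3), lt_min hε (by norm_num), min_le_right _ _, min_le_left _ _⟩
  have hc0 : 0 ≤ cos (π * δ) := cos_nonneg_of_neg_pi_div_two_le_of_le (by nlinarith) (by nlinarith)
  have hc1 : cos (π * δ) < 1 := by
    have := cos_lt_cos_of_nonneg_of_le_pi (x := 0) (y := π * δ) le_rfl (by nlinarith)
      (by positivity)
    rwa [cos_zero] at this
  obtain ⟨t, ht0, htπ, hp, hq, hγ⟩ := exists_small_side hs hc1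
    (γ := A + B - π + π * ε) (by rw [hlim]; nlinarith)
  have hst := sin_pos_of_pos_of_lt_pi ht0 htπ
  have hct : cos t < 1 := by
    have := cos_lt_cos_of_nonneg_of_le_pi (x := 0) le_rfl htπ.le ht0
    rwa [cos_zero] at this
  have hct' := neg_one_le_cos t
  have hsAB := mul_pos hsA hsB
  obtain ⟨n, hndef⟩ : ∃ n, n = √((cos A * cos t * sin B + sin A * cos B) ^ 2 +
    (sin t * sin B) ^ 2) := ⟨_, rfl⟩
  rw [← hndef] at hp hq
  have hn : 0 < n := by rw [hndef]; positivity
  have hn2 : n ^ 2 = (cos A * cos t * sin B + sin A * cos B) ^ 2 + (sin t * sin B) ^ 2 := by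
    rw [hndef, sq_sqrt (by positivity)]
  have ht2 := sin_sq_add_cos_sq t
  have hn2' : n ^ 2 = (cos A * sin B + sin A * cos B * cos t) ^ 2 + (sin t * sin A) ^ 2 := by
    rw [hn2, sq_side_identity]
  obtain ⟨γ, hγdef⟩ : ∃ γ, γ = arccos (-cos A * cos B + sin A * sin B * cos t) := ⟨_, rfl⟩
  rw [← hγdef] at hγ
  have hlt : -cos A * cos B + sin A * sin B * cos t < -cos (A + B) := by
    rw [cos_add]; nlinarith
  have hge : -1 ≤ -cos A * cos B + sin A * sin B * cos t := by
    have := cos_le_one (A - B)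
    rw [cos_sub] at this
    nlinarith
  have hcγ : cos γ = -cos A * cos B + sin A * sin B * cos t := by
    rw [hγdef, cos_arccos hge (by linarith only [hlt, neg_one_le_cos (A + B)])]
  have hγ' : A + B - π < γ := by
    rw [← hlim, hγdef]
    exact arccos_lt_arccos hge hlt (by linarith only [hlt, neg_one_le_cos (A + B)])
  obtain ⟨x, hli, hx, h01, h02, h12⟩ := exists_triangle_s8 hsA hsB hst hn hn2
  have h10 : ⟪x 1, x 0⟫ = _ := (real_inner_comm _ _).trans h01
  have h20 : ⟪x 2, x 0⟫ = _ := (real_inner_comm _ _).trans h02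
  have h21 : ⟪x 2, x 1⟫ = _ := (real_inner_comm _ _).trans h12
  -- The sines of the three sides, as the square roots of `1 - cos²`.
  have s01 : sin t ^ 2 = 1 - cos t ^ 2 := by linarith
  have s02 : (sin t * sin B / n) ^ 2 = 1 - ((cos A * cos t * sin B + sin A * cos B) / n) ^ 2 := by
    field_simp
    rw [hn2]; ring
  have s12 : (sin t * sin A / n) ^ 2 = 1 - ((cos A * sin B + sin A * cos B * cos t) / n) ^ 2 := by
    field_simp
    rw [hn2']; ring
  have hb : ∀ i j, -1 ≤ ⟪x i, x j⟫ := fun i j => by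
    have := abs_real_inner_le_norm (x i) (x j)
    rw [hx, hx, one_mul] at this
    exact (abs_le.1 this).1
  refine ⟨γ / π - (ϑ₁ + ϑ₂ - 1), ⟨?_, ?_⟩, x, hli, hx, ?_, ?_, ?_, ?_, ?_, ?_⟩
  · rw [sub_pos, lt_div_iff₀ hπ]; linarith only [hγ', hAdef, hBdef]
  · rw [sub_lt_iff_lt_add, div_lt_iff₀ hπ]; linarith only [hγ, hAdef, hBdef]
  · rw [← hAdef]
    refine sphericalAngle_eq_s8 (hx 0) (hx 1) (hx 2) (a := sin t) (b := sin t * sin B / n) hst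
      (by positivity) (by rw [h10, s01]) (by rw [h20, s02]) hA0.le hAπ.le ?_
    rw [h12, h10, h20]
    field_simp
    linear_combination (-(cos A * sin B)) * ht2
  · rw [← hBdef]
    refine sphericalAngle_eq_s8 (hx 1) (hx 2) (hx 0) (b := sin t) (a := sin t * sin A / n)
      (by positivity) hst (by rw [h21, s12]) (by rw [h01, s01]) hB0.le hBπ.le ?_
    rw [h20, h21, h01]
    field_simp
    linear_combination (-(sin A * cos B)) * ht2
  · rw [show π * (ϑ₁ + ϑ₂ - 1 + (γ / π - (ϑ₁ + ϑ₂ - 1))) = γ by field_simp; ring]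
    refine sphericalAngle_eq_s8 (hx 2) (hx 0) (hx 1) (a := sin t * sin B / n)
      (b := sin t * sin A / n) (by positivity) (by positivity) (by rw [h02, s02])
      (by rw [h12, s12]) (hγdef ▸ arccos_nonneg _) (hγdef ▸ arccos_le_pi _) ?_
    rw [h01, h02, h12, hcγ]
    field_simp
    rw [hn2]
    linear_combination third_angle_identity A B t
  · exact lt_arccos_of_lt_neg_cos hδ0.le (hδ1.trans (by norm_num)) hδε (hb 0 2) (by rwa [h02])
  · exact lt_arccos_of_lt_neg_cos hδ0.le (hδ1.trans (by norm_num)) hδε (hb 1 2) (by rwa [h12])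
  · intro a₁ a₂ ha₁ ha₂ ha
    refine lt_arccos_of_lt_neg_cos hδ0.le (hδ1.trans (by norm_num)) hδε ?_
      (inner_side_lt (hx 0) (hx 1) hc0 (by rwa [h20]) (by rwa [h21]) ha₁ ha₂ ha)
    have := abs_real_inner_le_norm (x 2)
      (‖a₁ • x 0 + a₂ • x 1‖⁻¹ • (a₁ • x 0 + a₂ • x 1))
    rw [hx, one_mul, norm_smul, norm_inv, norm_norm] at this
    exact (abs_le.1 (this.trans inv_mul_le_one)).1
end
end
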